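/- Assume p > n (for instance p = n + 1) and 𝒞 is compact with R = sup{Tr(X) : X ∈ 𝒞} < ∞. Let Y ∈ ℳ, μ ∈ ℝ^m and S = C − 𝒜*(μ). If ε_g, ε_H ≥ 0 are such that ‖2 S Y‖ ≤ ε_g and 2⟨Ẏ, S Ẏ⟩ ≥ −ε_H ‖Ẏ‖² for all Ẏ ∈ T_Yℳ, then Y is approximately optimal: 0 ≤ 2(Tr(C Y Yᵀ) − f*) ≤ √R ε_g + R ε_H. -/

import Mathlib

open Matrix MeasureTheory

noncomputable section

/-- Frobenius inner product `⟨A, B⟩ = Tr(Aᵀ B)`. -/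
def frobInner {n p : ℕ} (A B : Matrix (Fin n) (Fin p) ℝ) : ℝ := (Aᵀ * B).trace

/-- Frobenius norm. -/
def frobNorm {n p : ℕ} (A : Matrix (Fin n) (Fin p) ℝ) : ℝ := Real.sqrt (frobInner A A)

/-- The constraint map 𝒜, `𝒜(X) i = Tr(A i * X)`. -/
def Aop {n m : ℕ} (A : Fin m → Matrix (Fin n) (Fin n) ℝ) (X : Matrix (Fin n) (Fin n) ℝ) :
    Fin m → ℝ := fun i => (A i * X).trace

/-- The adjoint 𝒜*, `𝒜*(μ) = ∑ i, μ i • A i`. -/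
def Aadj {n m : ℕ} (A : Fin m → Matrix (Fin n) (Fin n) ℝ) (μ : Fin m → ℝ) :
    Matrix (Fin n) (Fin n) ℝ := ∑ i, μ i • A i

/-- The SDP feasible set 𝒞. -/
def sdpFeas {n m : ℕ} (A : Fin m → Matrix (Fin n) (Fin n) ℝ) (b : Fin m → ℝ) :
    Set (Matrix (Fin n) (Fin n) ℝ) := {X | X.IsSymm ∧ Aop A X = b ∧ X.PosSemidef}

/-- Optimal value `f* = inf {Tr(C X) : X ∈ 𝒞}` of the SDP. -/
def fstar {n m : ℕ} (A : Fin m → Matrix (Fin n) (Fin n) ℝ) (b : Fin m → ℝ)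
    (C : Matrix (Fin n) (Fin n) ℝ) : ℝ := sInf ((fun X => (C * X).trace) '' sdpFeas A b)

/-- The factorized feasible set `ℳ_p = {Y : 𝒜(Y Yᵀ) = b}`. -/
def facFeas {n m : ℕ} (A : Fin m → Matrix (Fin n) (Fin n) ℝ) (b : Fin m → ℝ) (p : ℕ) :
    Set (Matrix (Fin n) (Fin p) ℝ) := {Y | Aop A (Y * Yᵀ) = b}

/-- Tangent space `T_Yℳ = {Ydot : 𝒜(Ydot Yᵀ + Y Ydotᵀ) = 0}`. -/
def tangentSet {n m p : ℕ} (A : Fin m → Matrix (Fin n) (Fin n) ℝ)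
    (Y : Matrix (Fin n) (Fin p) ℝ) : Set (Matrix (Fin n) (Fin p) ℝ) :=
  {Ydot | Aop A (Ydot * Yᵀ + Y * Ydotᵀ) = 0}

/-- Second-order critical point of the factorized problem. -/
def IsSOCP {n m p : ℕ} (A : Fin m → Matrix (Fin n) (Fin n) ℝ) (b : Fin m → ℝ)
    (C : Matrix (Fin n) (Fin n) ℝ) (Y : Matrix (Fin n) (Fin p) ℝ) : Prop :=
  Y ∈ facFeas A b p ∧ ∃ μ : Fin m → ℝ,
    (C - Aadj A μ) * Y = 0 ∧
    ∀ Ydot ∈ tangentSet A Y, 0 ≤ frobInner Ydot ((C - Aadj A μ) * Ydot)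

/-- The real vector space of symmetric `n × n` matrices. -/
def symmSpace (n : ℕ) : Submodule ℝ (Matrix (Fin n) (Fin n) ℝ) where
  carrier := {X | X.IsSymm}
  add_mem' := fun ha hb => ha.add hb
  zero_mem' := Matrix.isSymm_zero
  smul_mem' := fun c X hX => by
    show (c • X)ᵀ = c • X
    rw [Matrix.transpose_smul, hX]

instance (n : ℕ) : MeasurableSpace ↥(symmSpace n) := borel _

/-- A set of symmetric matrices is null if it has measure zero for every additive Haar
measure on the finite-dimensional real vector space of symmetric `n × n` matrices. -/
def IsNullSymmSet (n : ℕ) (S : Set (Matrix (Fin n) (Fin n) ℝ)) : Prop :=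
  ∀ μ : Measure ↥(symmSpace n), μ.IsAddHaarMeasure →
    μ {C : ↥(symmSpace n) | (C : Matrix (Fin n) (Fin n) ℝ) ∈ S} = 0

lemma frobInner_eq_sum {n p : ℕ} (A B : Matrix (Fin n) (Fin p) ℝ) :
    frobInner A B = ∑ x : Fin p × Fin n, A x.2 x.1 * B x.2 x.1 := by
  simp [frobInner, Matrix.trace, Matrix.mul_apply, Fintype.sum_prod_type]

lemma frobInner_self_nonneg {n p : ℕ} (A : Matrix (Fin n) (Fin p) ℝ) : 0 ≤ frobInner A A := by
  rw [frobInner_eq_sum]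
  exact Finset.sum_nonneg fun x _ => mul_self_nonneg _

lemma frobInner_le {n p : ℕ} (A B : Matrix (Fin n) (Fin p) ℝ) :
    frobInner A B ≤ frobNorm A * frobNorm B := by
  unfold frobNorm
  simp only [frobInner_eq_sum, ← pow_two]
  exact Real.sum_mul_le_sqrt_mul_sqrt _ _ _

lemma frobNorm_sq {n p : ℕ} (A : Matrix (Fin n) (Fin p) ℝ) :
    frobNorm A ^ 2 = frobInner A A := Real.sq_sqrt (frobInner_self_nonneg A)

lemma trace_Aadj_mul {n m : ℕ} (A : Fin m → Matrix (Fin n) (Fin n) ℝ) (μ : Fin m → ℝ)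
    (X : Matrix (Fin n) (Fin n) ℝ) : (Aadj A μ * X).trace = ∑ i, μ i * Aop A X i := by
  simp [Aadj, Aop, Finset.sum_mul, Matrix.trace_sum]

lemma Aadj_isSymm {n m : ℕ} (A : Fin m → Matrix (Fin n) (Fin n) ℝ) (hA : ∀ i, (A i).IsSymm)
    (μ : Fin m → ℝ) : (Aadj A μ).IsSymm := by
  unfold Aadj Matrix.IsSymm
  rw [Matrix.transpose_sum]
  exact Finset.sum_congr rfl fun i _ => by rw [Matrix.transpose_smul, hA i]

lemma exists_ker {n p : ℕ} (h : n < p) (Y : Matrix (Fin n) (Fin p) ℝ) :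
    ∃ z : Fin p → ℝ, z ≠ 0 ∧ Y *ᵥ z = 0 := by
  have := LinearMap.ker_ne_bot_of_finrank_lt (f := Y.mulVecLin) (by simpa using h)
  obtain ⟨z, hz, hz0⟩ := (Submodule.ne_bot_iff _).1 this
  exact ⟨z, hz0, by simpa using hz⟩

lemma trace_mul_nonneg_of_psd {n : ℕ} {M X : Matrix (Fin n) (Fin n) ℝ}
    (hM : M.PosSemidef) (hX : X.PosSemidef) : 0 ≤ (M * X).trace := by
  obtain ⟨B, rfl⟩ : ∃ B : Matrix (Fin n) (Fin n) ℝ, X = Bᴴ * B := by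
    open scoped MatrixOrder in
    exact CStarAlgebra.nonneg_iff_eq_star_mul_self.1 hX.nonneg
  rw [← Matrix.mul_assoc, Matrix.trace_mul_comm, ← Matrix.mul_assoc]
  exact (hM.mul_mul_conjTranspose_same B).trace_nonneg

/-- for `p > n`, approximate second-order critical points are approximately
optimal: `0 ≤ 2(f(Y) − f*) ≤ √R ε_g + R ε_H`. -/
theorem approx_socp_approx_optimal_of_p_gt_n
    (n m p : ℕ) (hn : 0 < n) (hm : 0 < m) (hp : 0 < p) (hpn : n < p)
    (A : Fin m → Matrix (Fin n) (Fin n) ℝ) (hA : ∀ i, (A i).IsSymm) (b : Fin m → ℝ)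
    (C : Matrix (Fin n) (Fin n) ℝ) (hC : C.IsSymm)
    (hcompact : IsCompact (sdpFeas A b))
    (R : ℝ) (hR : R = sSup (Matrix.trace '' sdpFeas A b))
    (Y : Matrix (Fin n) (Fin p) ℝ) (hY : Y ∈ facFeas A b p)
    (μ : Fin m → ℝ) (S : Matrix (Fin n) (Fin n) ℝ) (hS : S = C - Aadj A μ)
    (εg εH : ℝ) (hεg : 0 ≤ εg) (hεH : 0 ≤ εH)
    (hgrad : frobNorm ((2 : ℝ) • (S * Y)) ≤ εg)
    (hhess : ∀ Ydot ∈ tangentSet A Y,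
      -(εH * frobNorm Ydot ^ 2) ≤ 2 * frobInner Ydot (S * Ydot)) :
    0 ≤ 2 * ((C * (Y * Yᵀ)).trace - fstar A b C) ∧
    2 * ((C * (Y * Yᵀ)).trace - fstar A b C) ≤ Real.sqrt R * εg + R * εH := by
  have hYX : Y * Yᵀ ∈ sdpFeas A b := by
    refine ⟨by simp [Matrix.IsSymm], hY, ?_⟩
    simpa using Matrix.posSemidef_self_mul_conjTranspose Y
  have hbd : BddBelow ((fun X => (C * X).trace) '' sdpFeas A b) :=
    (hcompact.image (by fun_prop)).bddBelow
  have hbdR : BddAbove (Matrix.trace '' sdpFeas A b) :=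
    (hcompact.image (continuous_id.matrix_trace)).bddAbove
  have htr : ∀ X ∈ sdpFeas A b, X.trace ≤ R := fun X hX => by
    rw [hR]; exact le_csSup hbdR ⟨X, hX, rfl⟩
  have hSsymm : S.IsSymm := by
    rw [hS]; exact hC.sub (Aadj_isSymm A hA μ)
  obtain ⟨z, hz0, hz⟩ := exists_ker hpn Y
  have hzz : 0 < z ⬝ᵥ z := by
    refine lt_of_le_of_ne ?_ (fun h => hz0 (dotProduct_self_eq_zero.1 h.symm))
    exact Finset.sum_nonneg fun x _ => mul_self_nonneg _
  have hquad : ∀ u : Fin n → ℝ, 0 ≤ 2 * (u ⬝ᵥ (S *ᵥ u)) + εH * (u ⬝ᵥ u) := by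
    intro u
    have ht : vecMulVec u z ∈ tangentSet A Y := by
      have h1 : vecMulVec u z * Yᵀ = 0 := by
        rw [vecMulVec_mul, vecMul_transpose, hz]; ext; simp [vecMulVec_apply]
      have h2 : Y * (vecMulVec u z)ᵀ = 0 := by
        rw [← Matrix.transpose_transpose Y, ← Matrix.transpose_mul, h1, Matrix.transpose_zero]
      show Aop A _ = 0
      rw [h1, h2]; ext; simp [Aop]
    have h := hhess _ ht
    have key : ∀ w : Fin n → ℝ,
        frobInner (vecMulVec u z) (vecMulVec w z) = (u ⬝ᵥ w) * (z ⬝ᵥ z) := by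
      intro w
      rw [frobInner, transpose_vecMulVec, vecMulVec_mul_vecMulVec, trace_vecMulVec,
        dotProduct_smul]
      simp
    rw [frobNorm_sq, mul_vecMulVec, key, key] at h
    by_contra hneg
    push Not at hneg
    nlinarith [mul_neg_of_neg_of_pos hneg hzz]
  have hM : ((2 : ℝ) • S + εH • (1 : Matrix (Fin n) (Fin n) ℝ)).PosSemidef := by
    refine .of_dotProduct_mulVec_nonneg ?_ (fun u => ?_)
    · show _ᴴ = _
      rw [Matrix.conjTranspose_eq_transpose_of_trivial]
      simp [hSsymm.eq]
    · have := hquad u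
      simpa [Matrix.add_mulVec, Matrix.smul_mulVec, dotProduct_add] using this
  have hCS : ∀ X ∈ sdpFeas A b, (C * X).trace = (S * X).trace + ∑ i, μ i * b i := by
    intro X hX
    have : C = S + Aadj A μ := by rw [hS]; abel
    rw [this, Matrix.add_mul, Matrix.trace_add, trace_Aadj_mul, hX.2.1]
  have hR0 : frobNorm Y ≤ Real.sqrt R := by
    refine Real.sqrt_le_sqrt ?_
    rw [frobInner, Matrix.trace_mul_comm]
    exact htr _ hYX
  have hYS : 2 * (S * (Y * Yᵀ)).trace ≤ Real.sqrt R * εg := by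
    have h1 := frobInner_le Y ((2 : ℝ) • (S * Y))
    have h2 : frobInner Y ((2 : ℝ) • (S * Y)) = 2 * (S * (Y * Yᵀ)).trace := by
      rw [frobInner, Matrix.mul_smul, Matrix.trace_smul, Matrix.trace_mul_comm,
        Matrix.mul_assoc, smul_eq_mul]
    rw [h2] at h1
    exact h1.trans (mul_le_mul hR0 hgrad (Real.sqrt_nonneg _) (Real.sqrt_nonneg _))
  constructor
  · have : fstar A b C ≤ (C * (Y * Yᵀ)).trace := csInf_le hbd ⟨_, hYX, rfl⟩
    linarith
  · have : (C * (Y * Yᵀ)).trace - (Real.sqrt R * εg + R * εH) / 2 ≤ fstar A b C := by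
      refine le_csInf ⟨_, _, hYX, rfl⟩ ?_
      rintro _ ⟨X, hX, rfl⟩
      have h1 := trace_mul_nonneg_of_psd hM hX.2.2
      rw [Matrix.add_mul, Matrix.trace_add, Matrix.smul_mul, Matrix.smul_mul, Matrix.one_mul,
        Matrix.trace_smul, Matrix.trace_smul, smul_eq_mul, smul_eq_mul] at h1
      have h2 := mul_le_mul_of_nonneg_left (htr X hX) hεH
      have h3 := hCS X hX
      have h4 := hCS _ hYX
      simp only
      linarith
    linarith

end
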